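/- arXiv:1804.07416 — 2 statements merged into one kernel-verified Lean document; each statement's English description precedes it below -/
import Mathlib

section
/- For jointly standard normal variables (W_i, W_j) with correlation ρ ∈ (−1,1), the covariance of the indicators 1_{|W_i| ≤ t} and 1_{|W_j| ≤ t} equals Σ_{k≥1} (ρ^k/k!)·[H_{k−1}(t)φ(t) − H_{k−1}(−t)φ(−t)]², where H_k are the Hermite polynomials and φ the standard normal density. -/
open MeasureTheory ProbabilityTheory Filter

/-- The standard normal density. -/
noncomputable def stdGaussianPDF (x : ℝ) : ℝ :=
  (Real.sqrt (2 * Real.pi))⁻¹ * Real.exp (-x ^ 2 / 2)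

/-- The `k`-th probabilists' Hermite polynomial evaluated at `x`. -/
noncomputable def Hermite (k : ℕ) (x : ℝ) : ℝ := Polynomial.aeval x (Polynomial.hermite k)

/-- The bivariate standard normal density with correlation `ρ`. -/
noncomputable def bvnPDF (ρ x y : ℝ) : ℝ :=
  (2 * Real.pi * Real.sqrt (1 - ρ ^ 2))⁻¹ *
    Real.exp (-(x ^ 2 + y ^ 2 - 2 * ρ * x * y) / (2 * (1 - ρ ^ 2)))

/-- The Appell sequence with generating function `exp (x z + c z² / 2)`, i.e. the Hermite
polynomials of variance `-c`. -/
def scaledHermite {R : Type*} [CommRing R] (c : R) : ℕ → R → R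
  | 0, _ => 1
  | 1, x => x
  | n + 2, x => x * scaledHermite c (n + 1) x + c * (n + 1) * scaledHermite c n x

theorem scaledHermite_succ {R : Type*} [CommRing R] (c : R) (n : ℕ) (x : R) :
    scaledHermite c (n + 1) x
      = x * scaledHermite c n x + c * (n * scaledHermite c (n - 1) x) := by
  cases n with
  | zero => simp [scaledHermite]
  | succ n => simp [scaledHermite, mul_assoc]

theorem scaledHermite_ofReal (c : ℝ) (n : ℕ) (x : ℝ) :
    scaledHermite (c : ℂ) n (x : ℂ) = (scaledHermite c n x : ℝ) := by
  induction n using Nat.twoStepInduction with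
  | zero => simp [scaledHermite]
  | one => simp [scaledHermite]
  | more n h1 h2 => simp [scaledHermite, h1, h2]

theorem hasDerivAt_scaledHermite (c : ℂ) (n : ℕ) (x : ℂ) :
    HasDerivAt (scaledHermite c n) (n * scaledHermite c (n - 1) x) x := by
  induction n using Nat.twoStepInduction with
  | zero => simpa [scaledHermite] using hasDerivAt_const x (1 : ℂ)
  | one => simpa [scaledHermite] using hasDerivAt_id' x
  | more n h1 h2 =>
    refine (((hasDerivAt_id x).mul h2).add (h1.const_mul (c * (n + 1)))).congr_deriv ?_
    simp only [id_eq, Nat.add_sub_cancel, Nat.add_succ_sub_one, scaledHermite_succ c n x]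
    push_cast
    ring

theorem iteratedDeriv_exp_quadratic (c x : ℂ) (n : ℕ) :
    iteratedDeriv n (fun z : ℂ => Complex.exp (x * z + c * z ^ 2 / 2))
      = fun z => scaledHermite c n (x + c * z) * Complex.exp (x * z + c * z ^ 2 / 2) := by
  induction n with
  | zero => simp [scaledHermite]
  | succ n ih =>
    rw [iteratedDeriv_succ, ih]
    funext z
    have h1 : HasDerivAt (fun z : ℂ => x + c * z) c z := by
      simpa using ((hasDerivAt_id z).const_mul c).const_add x
    have h2 : HasDerivAt (fun z : ℂ => x * z + c * z ^ 2 / 2) (x + c * z) z := by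
      refine (((hasDerivAt_id z).const_mul x).add
        ((((hasDerivAt_id z).pow 2).const_mul c).div_const 2)).congr_deriv ?_
      simp
      ring
    have h3 := ((hasDerivAt_scaledHermite c n (x + c * z)).comp z h1).mul h2.cexp
    refine h3.deriv.trans ?_
    rw [scaledHermite_succ]
    simp only [Function.comp_apply]
    ring

theorem hasSum_scaledHermite (c x z : ℂ) :
    HasSum (fun k : ℕ => z ^ k / (k.factorial : ℂ) * scaledHermite c k x)
      (Complex.exp (x * z + c * z ^ 2 / 2)) := by
  have h := Complex.hasSum_taylorSeries_of_entire
    (f := fun z : ℂ => Complex.exp (x * z + c * z ^ 2 / 2)) (by fun_prop) 0 z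
  refine h.congr_fun fun k => ?_
  simp [iteratedDeriv_exp_quadratic]
  ring

theorem hasSum_scaledHermite_real (c x z : ℝ) :
    HasSum (fun k : ℕ => z ^ k / (k.factorial : ℝ) * scaledHermite c k x)
      (Real.exp (x * z + c * z ^ 2 / 2)) := by
  rw [← Complex.hasSum_ofReal]
  simpa [scaledHermite_ofReal] using hasSum_scaledHermite (c : ℂ) x z

theorem norm_scaledHermite_le {c x : ℂ} {t : ℝ} (hc : ‖c‖ ≤ 1) (hx : ‖x‖ ≤ t) (n : ℕ) :
    ‖scaledHermite c n x‖ ≤ scaledHermite 1 n t := by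
  have ht : 0 ≤ t := (norm_nonneg x).trans hx
  induction n using Nat.twoStepInduction with
  | zero => simp [scaledHermite]
  | one => simpa [scaledHermite] using hx
  | more n h1 h2 =>
    refine (norm_add_le _ _).trans ?_
    have hn : ‖(n : ℂ) + 1‖ = n + 1 := by
      rw [← Nat.cast_succ, Complex.norm_natCast, Nat.cast_succ]
    rw [scaledHermite, norm_mul, norm_mul, norm_mul, hn]
    gcongr

theorem integrable_exp_abs_sub_sq {d : ℝ} (hd : 0 < d) (A B : ℝ) :
    Integrable fun u : ℝ => Real.exp (A + B * |u| - d * u ^ 2) := by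
  refine ((integrable_exp_neg_mul_sq (half_pos hd)).const_mul
    (Real.exp (A + B ^ 2 / (2 * d)))).mono' (by fun_prop) (ae_of_all _ fun u => ?_)
  rw [Real.norm_eq_abs, Real.abs_exp, ← Real.exp_add, Real.exp_le_exp]
  have h : B ^ 2 / (2 * d) - B * |u| + d / 2 * u ^ 2 = (B - d * |u|) ^ 2 / (2 * d) := by
    field_simp
    rw [sub_sq, mul_pow, sq_abs]
    ring
  have : 0 ≤ (B - d * |u|) ^ 2 / (2 * d) := by positivity
  linarith

theorem stdGaussianPDF_nonneg (x : ℝ) : 0 ≤ stdGaussianPDF x := by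
  unfold stdGaussianPDF; positivity

theorem stdGaussianPDF_le_one (x : ℝ) : stdGaussianPDF x ≤ 1 := by
  unfold stdGaussianPDF
  refine mul_le_one₀ (inv_le_one_of_one_le₀ ?_) (Real.exp_pos _).le ?_
  · rw [Real.one_le_sqrt]; linarith [Real.pi_gt_three]
  · rw [Real.exp_le_one_iff]; nlinarith [sq_nonneg x]

@[fun_prop]
theorem continuous_stdGaussianPDF : Continuous stdGaussianPDF := by
  unfold stdGaussianPDF; fun_prop

theorem hasDerivAt_stdGaussianPDF (x : ℝ) :
    HasDerivAt stdGaussianPDF (-x * stdGaussianPDF x) x := by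
  have h : HasDerivAt (fun x : ℝ => -x ^ 2 / 2) (-x) x := by
    refine ((hasDerivAt_pow 2 x).neg.div_const 2).congr_deriv ?_
    simp
    ring
  refine (h.exp.const_mul (Real.sqrt (2 * Real.pi))⁻¹).congr_deriv ?_
  unfold stdGaussianPDF
  ring

theorem integral_stdGaussianPDF : ∫ u, stdGaussianPDF u = 1 := by
  have h := integral_gaussianPDFReal_eq_one 0 (v := 1) (by simp)
  simpa [gaussianPDFReal_def, stdGaussianPDF] using h

theorem norm_add_mul_le {x s : ℂ} (hs : ‖s‖ = 1) (u : ℝ) : ‖x + s * u‖ ≤ ‖x‖ + |u| := by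
  refine (norm_add_le _ _).trans ?_
  simp [hs]

theorem integrable_pow_mul_stdGaussianPDF (x : ℂ) {s : ℂ} (hs : ‖s‖ = 1) (k : ℕ) :
    Integrable fun u : ℝ => (x + s * u) ^ k * (stdGaussianPDF u : ℂ) := by
  refine ((integrable_exp_abs_sub_sq (d := 1 / 2) (by norm_num) ‖x‖ 1).const_mul
    (k.factorial * (Real.sqrt (2 * Real.pi))⁻¹)).mono'
    (by fun_prop) (ae_of_all _ fun u => ?_)
  rw [norm_mul, norm_pow, Complex.norm_real, Real.norm_of_nonneg (stdGaussianPDF_nonneg u)]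
  have h0 : ‖x + s * u‖ ^ k ≤ k.factorial * Real.exp (‖x‖ + |u|) := by
    have h1 := Real.pow_div_factorial_le_exp (‖x‖ + |u|) (by positivity) k
    rw [div_le_iff₀ (by positivity)] at h1
    calc _ ≤ (‖x‖ + |u|) ^ k := by gcongr; exact norm_add_mul_le hs u
      _ ≤ _ := by linarith
  calc _ ≤ (k.factorial * Real.exp (‖x‖ + |u|)) * stdGaussianPDF u := by
        gcongr; exact stdGaussianPDF_nonneg u
    _ = _ := by
      rw [stdGaussianPDF, show ‖x‖ + 1 * |u| - 1 / 2 * u ^ 2 = (‖x‖ + |u|) + -u ^ 2 / 2 by ring,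
        Real.exp_add (‖x‖ + |u|)]
      ring

theorem integral_pow_succ_mul_stdGaussianPDF {c s : ℂ} (hs : ‖s‖ = 1) (hc : s ^ 2 = c) (x : ℂ)
    (n : ℕ) :
    ∫ u : ℝ, (x + s * u) ^ (n + 1) * (stdGaussianPDF u : ℂ)
      = x * (∫ u : ℝ, (x + s * u) ^ n * (stdGaussianPDF u : ℂ))
        + c * (n * ∫ u : ℝ, (x + s * u) ^ (n - 1) * (stdGaussianPDF u : ℂ)) := by
  have hi := integrable_pow_mul_stdGaussianPDF x hs
  have hd : ∀ u : ℝ, HasDerivAt (fun u : ℝ => s * ((x + s * u) ^ n * (stdGaussianPDF u : ℂ)))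
      (x * ((x + s * u) ^ n * (stdGaussianPDF u : ℂ))
        + c * (n * ((x + s * u) ^ (n - 1) * (stdGaussianPDF u : ℂ)))
        - (x + s * u) ^ (n + 1) * (stdGaussianPDF u : ℂ)) u := by
    intro u
    have h1 : HasDerivAt (fun u : ℝ => x + s * (u : ℂ)) s u := by
      simpa using ((Complex.ofRealCLM.hasDerivAt (x := u)).const_mul s).const_add x
    refine (((h1.pow n).mul (hasDerivAt_stdGaussianPDF u).ofReal_comp).const_mul s).congr_deriv ?_
    rw [← hc]
    simp only [Pi.pow_apply]
    push_cast
    ring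
  have h1 := (hi n).const_mul x
  have h2 := ((hi (n - 1)).const_mul (n : ℂ)).const_mul c
  have h12 : Integrable fun u : ℝ => x * ((x + s * u) ^ n * (stdGaussianPDF u : ℂ))
      + c * (n * ((x + s * u) ^ (n - 1) * (stdGaussianPDF u : ℂ))) := h1.add h2
  have h0 := integral_eq_zero_of_hasDerivAt_of_integrable hd (h12.sub (hi (n + 1)))
    ((hi n).const_mul s)
  rw [integral_sub h12 (hi (n + 1)), integral_add h1 h2, integral_const_mul, integral_const_mul,
    integral_const_mul] at h0
  exact (sub_eq_zero.mp h0).symm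

theorem integral_pow_mul_stdGaussianPDF {c s : ℂ} (hs : ‖s‖ = 1) (hc : s ^ 2 = c) (x : ℂ)
    (k : ℕ) :
    ∫ u : ℝ, (x + s * u) ^ k * (stdGaussianPDF u : ℂ) = scaledHermite c k x := by
  induction k using Nat.strong_induction_on with
  | _ k ih =>
    cases k with
    | zero =>
      simp only [pow_zero, one_mul, scaledHermite]
      rw [integral_complex_ofReal, integral_stdGaussianPDF, Complex.ofReal_one]
    | succ n =>
      rw [integral_pow_succ_mul_stdGaussianPDF hs hc, scaledHermite_succ, ih n (by lia),
        ih (n - 1) (by lia)]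

theorem hasSum_scaledHermite_mul {c s x y : ℂ} {ρ t : ℝ} (hρ : |ρ| < 1) (hs : ‖s‖ = 1)
    (hc : s ^ 2 = c) (hx : ‖x‖ ≤ t) (hy : ‖y‖ ≤ t) :
    HasSum (fun k : ℕ => (ρ : ℂ) ^ k / (k.factorial : ℂ)
        * (scaledHermite c k x * scaledHermite c k y))
      (∫ u : ℝ, Complex.exp (y * (ρ * (x + s * u)) + c * (ρ * (x + s * u)) ^ 2 / 2)
        * (stdGaussianPDF u : ℂ)) := by
  have hc1 : ‖c‖ ≤ 1 := by rw [← hc, norm_pow, hs, one_pow]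
  have hbound (u : ℝ) : HasSum (fun k : ℕ => (|ρ| * (t + |u|)) ^ k / (k.factorial : ℝ)
      * scaledHermite 1 k t * stdGaussianPDF u)
      (Real.exp (t * (|ρ| * (t + |u|)) + 1 * (|ρ| * (t + |u|)) ^ 2 / 2) * stdGaussianPDF u) :=
    (hasSum_scaledHermite_real 1 t (|ρ| * (t + |u|))).mul_right _
  have h := hasSum_integral_of_dominated_convergence (μ := volume)
    (F := fun (k : ℕ) (u : ℝ) => (ρ : ℂ) ^ k / (k.factorial : ℂ) * scaledHermite c k y
      * ((x + s * u) ^ k * (stdGaussianPDF u : ℂ)))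
    (f := fun u : ℝ => Complex.exp (y * (ρ * (x + s * u)) + c * (ρ * (x + s * u)) ^ 2 / 2)
        * (stdGaussianPDF u : ℂ))
    (fun k u => (|ρ| * (t + |u|)) ^ k / (k.factorial : ℝ)
      * scaledHermite 1 k t * stdGaussianPDF u)
    (fun k => by fun_prop) (fun k => ae_of_all _ fun u => ?_)
    (ae_of_all _ fun u => (hbound u).summable) ?_ (ae_of_all _ fun u => ?_)
  · refine h.congr_fun fun k => ?_
    rw [integral_const_mul, integral_pow_mul_stdGaussianPDF hs hc]
    ring
  · rw [norm_mul, norm_mul, norm_mul, norm_div, norm_pow, norm_pow, Complex.norm_real,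
      Complex.norm_natCast, Complex.norm_real, Real.norm_of_nonneg (stdGaussianPDF_nonneg u),
      Real.norm_eq_abs]
    have h1 : ‖x + s * u‖ ^ k ≤ (t + |u|) ^ k := by
      gcongr
      exact (norm_add_mul_le hs u).trans (by gcongr)
    have h2 := norm_scaledHermite_le hc1 hy k
    calc |ρ| ^ k / k.factorial * ‖scaledHermite c k y‖ * (‖x + s * u‖ ^ k * stdGaussianPDF u)
        ≤ |ρ| ^ k / k.factorial * scaledHermite 1 k t * ((t + |u|) ^ k * stdGaussianPDF u) := by
          have := stdGaussianPDF_nonneg u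
          have := (norm_nonneg _).trans h2
          gcongr
      _ = _ := by rw [mul_pow]; ring
  · simp_rw [(hbound _).tsum_eq]
    have hd : 0 < (1 - |ρ| ^ 2) / 2 := by
      have := pow_lt_one₀ (abs_nonneg ρ) hρ two_ne_zero
      linarith
    refine ((integrable_exp_abs_sub_sq hd (|ρ| * t ^ 2 + |ρ| ^ 2 * t ^ 2 / 2)
      (|ρ| * t + |ρ| ^ 2 * t)).const_mul (Real.sqrt (2 * Real.pi))⁻¹).congr
      (ae_of_all _ fun u => ?_)
    simp only [stdGaussianPDF]
    rw [mul_left_comm, ← Real.exp_add]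
    congr 2
    rw [← sq_abs u]
    ring
  · refine ((hasSum_scaledHermite c y (ρ * (x + s * u))).mul_right
      (stdGaussianPDF u : ℂ)).congr_fun fun k => ?_
    rw [mul_pow]
    ring

theorem summable_scaledHermite_sq {ρ t : ℝ} (hρ : |ρ| < 1) (ht : 0 ≤ t) :
    Summable fun k : ℕ => |ρ| ^ k / (k.factorial : ℝ) * scaledHermite 1 k t ^ 2 := by
  have hn : ‖(t : ℂ)‖ ≤ t := by rw [Complex.norm_real, Real.norm_of_nonneg ht]
  have h := (hasSum_scaledHermite_mul (c := 1) (s := 1) (ρ := |ρ|) (by rwa [abs_abs]) norm_one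
    (one_pow 2) hn hn).summable
  rw [← Complex.summable_ofReal]
  refine h.congr fun k => ?_
  have := scaledHermite_ofReal 1 k t
  push_cast at this ⊢
  rw [this, sq]

theorem integral_cexp_mul_stdGaussianPDF {ρ : ℝ} (hρ : |ρ| < 1) (x y : ℝ) :
    (∫ u : ℝ, Complex.exp (y * (ρ * (x + Complex.I * u))
        + (-1) * (ρ * (x + Complex.I * u)) ^ 2 / 2) * (stdGaussianPDF u : ℂ))
      = ((Real.sqrt (1 - ρ ^ 2))⁻¹ * Real.exp (ρ * x * y - ρ ^ 2 * x ^ 2 / 2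
        - ρ ^ 2 * (y - ρ * x) ^ 2 / (2 * (1 - ρ ^ 2))) : ℝ) := by
  have hd : 0 < 1 - ρ ^ 2 := by
    have := (sq_lt_one_iff_abs_lt_one ρ).mpr hρ
    linarith
  have hdc : (1 : ℂ) - (ρ : ℂ) ^ 2 ≠ 0 := by exact_mod_cast hd.ne'
  have h := integral_cexp_quadratic (b := ((-((1 - ρ ^ 2) / 2) : ℝ) : ℂ))
    (by rw [Complex.ofReal_re]; linarith) (Complex.I * (ρ * y - ρ ^ 2 * x))
    (ρ * x * y - ρ ^ 2 * x ^ 2 / 2)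
  have hpi : ((Real.pi : ℂ) / -((-((1 - ρ ^ 2) / 2) : ℝ) : ℂ)) ^ (1 / 2 : ℂ)
      = (Real.sqrt (2 * Real.pi) * (Real.sqrt (1 - ρ ^ 2))⁻¹ : ℝ) := by
    rw [← Real.sqrt_inv, ← Real.sqrt_mul (by positivity), Real.sqrt_eq_rpow,
      Complex.ofReal_cpow (by positivity)]
    congr 1
    · push_cast
      field_simp
    · norm_num
  rw [hpi] at h
  calc _ = ∫ u : ℝ, ((Real.sqrt (2 * Real.pi))⁻¹ : ℝ) * Complex.exp
        (((-((1 - ρ ^ 2) / 2) : ℝ) : ℂ) * u ^ 2 + (Complex.I * (ρ * y - ρ ^ 2 * x)) * u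
          + (ρ * x * y - ρ ^ 2 * x ^ 2 / 2)) := by
        congr 1
        funext u
        rw [stdGaussianPDF, Complex.ofReal_mul, Complex.ofReal_exp, mul_left_comm,
          ← Complex.exp_add]
        congr 2
        push_cast
        linear_combination (-(ρ : ℂ) ^ 2 * u ^ 2 / 2) * Complex.I_sq
    _ = _ := by
        rw [integral_const_mul, h, ← mul_assoc, ← Complex.ofReal_mul, Complex.ofReal_mul _
          (Real.exp _), Complex.ofReal_exp]
        congr 2
        · have : Real.sqrt (2 * Real.pi) ≠ 0 := by positivity
          rw [inv_mul_cancel_left₀ this]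
        · push_cast
          rw [mul_pow, Complex.I_sq]
          field_simp
          ring

theorem derivative_hermite_succ (n : ℕ) :
    Polynomial.derivative (Polynomial.hermite (n + 1)) = (n + 1) * Polynomial.hermite n := by
  induction n with
  | zero => simp
  | succ n ih =>
    rw [Polynomial.hermite_succ (n + 1), map_sub, Polynomial.derivative_mul,
      Polynomial.derivative_X, ih, Polynomial.derivative_mul, Polynomial.hermite_succ n]
    simp
    ring

theorem scaledHermite_neg_one (n : ℕ) (x : ℝ) : scaledHermite (-1) n x = Hermite n x := by
  induction n using Nat.twoStepInduction with
  | zero => simp [scaledHermite, Hermite]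
  | one => simp [scaledHermite, Hermite]
  | more n h1 h2 =>
    rw [scaledHermite, h1, h2, Hermite, Hermite, Hermite, Polynomial.hermite_succ (n + 1),
      derivative_hermite_succ]
    simp
    ring

theorem abs_Hermite_le {x t : ℝ} (hx : |x| ≤ t) (n : ℕ) :
    |Hermite n x| ≤ scaledHermite 1 n t := by
  have h := norm_scaledHermite_le (c := ((-1 : ℝ) : ℂ)) (x := x) (by simp) (by simpa using hx) n
  rwa [scaledHermite_ofReal, Complex.norm_real, Real.norm_eq_abs, scaledHermite_neg_one] at h

/-- Mehler's expansion of the bivariate normal density. -/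
theorem hasSum_bvnPDF {ρ : ℝ} (hρ : |ρ| < 1) (x y : ℝ) :
    HasSum (fun k : ℕ => ρ ^ k / (k.factorial : ℝ)
        * ((Hermite k x * stdGaussianPDF x) * (Hermite k y * stdGaussianPDF y)))
      (bvnPDF ρ x y) := by
  have h := hasSum_scaledHermite_mul (c := -1) (s := Complex.I) (x := x) (y := y)
    (t := max |x| |y|) hρ Complex.norm_I Complex.I_sq (by simp) (by simp)
  rw [integral_cexp_mul_stdGaussianPDF hρ] at h
  have hcast (k : ℕ) (z : ℝ) : scaledHermite (-1 : ℂ) k z = (Hermite k z : ℝ) := by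
    rw [← scaledHermite_neg_one, ← scaledHermite_ofReal]
    simp
  simp_rw [hcast] at h
  have h' : HasSum (fun k : ℕ => ρ ^ k / (k.factorial : ℝ) * (Hermite k x * Hermite k y))
      ((Real.sqrt (1 - ρ ^ 2))⁻¹ * Real.exp (ρ * x * y - ρ ^ 2 * x ^ 2 / 2
        - ρ ^ 2 * (y - ρ * x) ^ 2 / (2 * (1 - ρ ^ 2)))) := by
    rw [← Complex.hasSum_ofReal]
    push_cast at h ⊢
    exact h
  have hd : 0 < 1 - ρ ^ 2 := by
    have := (sq_lt_one_iff_abs_lt_one ρ).mpr hρ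
    linarith
  have hpi : (2 * Real.pi)⁻¹ = (Real.sqrt (2 * Real.pi))⁻¹ ^ 2 := by
    rw [inv_pow, Real.sq_sqrt (by positivity)]
  have hexp : Real.exp (-(x ^ 2 + y ^ 2 - 2 * ρ * x * y) / (2 * (1 - ρ ^ 2)))
      = Real.exp (ρ * x * y - ρ ^ 2 * x ^ 2 / 2
        - ρ ^ 2 * (y - ρ * x) ^ 2 / (2 * (1 - ρ ^ 2))) * Real.exp (-x ^ 2 / 2)
        * Real.exp (-y ^ 2 / 2) := by
    rw [← Real.exp_add, ← Real.exp_add]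
    congr 1
    field_simp
    ring
  have hval : bvnPDF ρ x y = (Real.sqrt (1 - ρ ^ 2))⁻¹ * Real.exp (ρ * x * y
      - ρ ^ 2 * x ^ 2 / 2 - ρ ^ 2 * (y - ρ * x) ^ 2 / (2 * (1 - ρ ^ 2)))
      * (stdGaussianPDF x * stdGaussianPDF y) := by
    rw [bvnPDF, hexp, stdGaussianPDF, stdGaussianPDF, mul_inv, hpi]
    ring
  rw [hval]
  exact (h'.mul_right (stdGaussianPDF x * stdGaussianPDF y)).congr_fun fun k => by ring

@[fun_prop]
theorem continuous_Hermite (n : ℕ) : Continuous (Hermite n) :=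
  (Polynomial.hermite n).continuous_aeval

theorem integral_Hermite_succ_mul_stdGaussianPDF (n : ℕ) {t : ℝ} (ht : 0 ≤ t) :
    ∫ x in Set.Icc (-t) t, Hermite (n + 1) x * stdGaussianPDF x
      = Hermite n (-t) * stdGaussianPDF (-t) - Hermite n t * stdGaussianPDF t := by
  have hd (x : ℝ) : HasDerivAt (fun x => -(Hermite n x * stdGaussianPDF x))
      (Hermite (n + 1) x * stdGaussianPDF x) x := by
    have h : HasDerivAt (Hermite n)
        (Polynomial.aeval x (Polynomial.derivative (Polynomial.hermite n))) x :=
      (Polynomial.hermite n).hasDerivAt_aeval x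
    refine (h.mul (hasDerivAt_stdGaussianPDF x)).neg.congr_deriv ?_
    simp only [Hermite, Polynomial.hermite_succ, map_sub, map_mul, Polynomial.aeval_X]
    ring
  rw [integral_Icc_eq_integral_Ioc, ← intervalIntegral.integral_of_le (by linarith),
    intervalIntegral.integral_eq_sub_of_hasDerivAt (fun x _ => hd x)
      (Continuous.intervalIntegrable (by fun_prop) _ _)]
  ring

theorem abs_Hermite_mul_stdGaussianPDF_le {x t : ℝ} (hx : x ∈ Set.Icc (-t) t) (n : ℕ) :
    |Hermite n x * stdGaussianPDF x| ≤ scaledHermite 1 n t := by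
  rw [abs_mul, abs_of_nonneg (stdGaussianPDF_nonneg x)]
  exact (mul_le_of_le_one_right (abs_nonneg _) (stdGaussianPDF_le_one x)).trans
    (abs_Hermite_le (abs_le.mpr hx) n)

theorem hasSum_integral_bvnPDF_right {ρ t x : ℝ} (hρ : |ρ| < 1) (hx : x ∈ Set.Icc (-t) t) :
    HasSum (fun k : ℕ => ρ ^ k / (k.factorial : ℝ) * ((Hermite k x * stdGaussianPDF x)
        * ∫ y in Set.Icc (-t) t, Hermite k y * stdGaussianPDF y))
      (∫ y in Set.Icc (-t) t, bvnPDF ρ x y) := by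
  have ht : 0 ≤ t := by linarith [hx.1, hx.2]
  have h := hasSum_integral_of_dominated_convergence (μ := volume.restrict (Set.Icc (-t) t))
    (F := fun (k : ℕ) (y : ℝ) => ρ ^ k / (k.factorial : ℝ)
      * ((Hermite k x * stdGaussianPDF x) * (Hermite k y * stdGaussianPDF y)))
    (f := bvnPDF ρ x)
    (fun k _ => |ρ| ^ k / (k.factorial : ℝ) * scaledHermite 1 k t ^ 2)
    (fun k => by fun_prop) (fun k => ?_)
    (ae_of_all _ fun _ => summable_scaledHermite_sq hρ ht) (integrable_const _)
    (ae_of_all _ fun y => hasSum_bvnPDF hρ x y)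
  · simpa only [integral_const_mul] using h
  · refine (ae_restrict_iff' measurableSet_Icc).mpr (ae_of_all _ fun y hy => ?_)
    rw [Real.norm_eq_abs, abs_mul, abs_div, abs_pow, Nat.abs_cast, abs_mul, sq]
    have h1 := abs_Hermite_mul_stdGaussianPDF_le hx k
    have h2 := abs_Hermite_mul_stdGaussianPDF_le hy k
    have h3 := (abs_nonneg _).trans h1
    gcongr

theorem hasSum_integral_integral_bvnPDF {ρ t : ℝ} (hρ : |ρ| < 1) (ht : 0 ≤ t) :
    HasSum (fun k : ℕ => ρ ^ k / (k.factorial : ℝ)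
        * (∫ x in Set.Icc (-t) t, Hermite k x * stdGaussianPDF x) ^ 2)
      (∫ x in Set.Icc (-t) t, ∫ y in Set.Icc (-t) t, bvnPDF ρ x y) := by
  have hI (k : ℕ) : |∫ y in Set.Icc (-t) t, Hermite k y * stdGaussianPDF y|
      ≤ scaledHermite 1 k t * (2 * t) := by
    have h := norm_setIntegral_le_of_norm_le_const (μ := volume) (s := Set.Icc (-t) t)
      (f := fun y => Hermite k y * stdGaussianPDF y) (C := scaledHermite 1 k t) (by simp) (fun y hy => abs_Hermite_mul_stdGaussianPDF_le hy k)
    rwa [Real.volume_real_Icc_of_le (by linarith), sub_neg_eq_add, ← two_mul] at h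
  have h := hasSum_integral_of_dominated_convergence (μ := volume.restrict (Set.Icc (-t) t))
    (F := fun (k : ℕ) (x : ℝ) => ρ ^ k / (k.factorial : ℝ) * ((Hermite k x * stdGaussianPDF x)
      * ∫ y in Set.Icc (-t) t, Hermite k y * stdGaussianPDF y))
    (f := fun x => ∫ y in Set.Icc (-t) t, bvnPDF ρ x y)
    (fun k _ => |ρ| ^ k / (k.factorial : ℝ) * scaledHermite 1 k t ^ 2 * (2 * t))
    (fun k => by fun_prop) (fun k => ?_)
    (ae_of_all _ fun _ => (summable_scaledHermite_sq hρ ht).mul_right _) (integrable_const _)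
    ((ae_restrict_iff' measurableSet_Icc).mpr
      (ae_of_all _ fun x hx => hasSum_integral_bvnPDF_right hρ hx))
  · simpa only [integral_const_mul, integral_mul_const, ← sq] using h
  · refine (ae_restrict_iff' measurableSet_Icc).mpr (ae_of_all _ fun x hx => ?_)
    rw [Real.norm_eq_abs, abs_mul, abs_div, abs_pow, Nat.abs_cast, abs_mul, mul_assoc, sq,
      mul_assoc (scaledHermite 1 k t)]
    have h1 := abs_Hermite_mul_stdGaussianPDF_le hx k
    have h2 := hI k
    have h3 := (abs_nonneg _).trans h1
    gcongr

/-- Mehler-expansion formula for the covariance of the indicators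
`1_{|W_i| ≤ t}` and `1_{|W_j| ≤ t}` for jointly standard normal `(W_i, W_j)`
with correlation `ρ`: the covariance is
`P(|W_i| ≤ t, |W_j| ≤ t) − P(|W| ≤ t)²`. -/
theorem stmt9 (ρ t : ℝ) (hρ : ρ ∈ Set.Ioo (-1 : ℝ) 1) (ht : 0 < t) :
    (∫ x in Set.Icc (-t) t, ∫ y in Set.Icc (-t) t, bvnPDF ρ x y)
        - (∫ x in Set.Icc (-t) t, stdGaussianPDF x) ^ 2
      = ∑' k : ℕ, ρ ^ (k + 1) / (Nat.factorial (k + 1)) *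
          (Hermite k t * stdGaussianPDF t - Hermite k (-t) * stdGaussianPDF (-t)) ^ 2 := by
  have h := hasSum_integral_integral_bvnPDF (abs_lt.mpr hρ) ht.le
  rw [← hasSum_nat_add_iff' 1] at h
  simp only [Finset.sum_range_one, pow_zero, Nat.factorial_zero, Nat.cast_one, div_one, one_mul,
    integral_Hermite_succ_mul_stdGaussianPDF _ ht.le] at h
  have h0 (x : ℝ) : Hermite 0 x = 1 := by simp [Hermite]
  simp only [h0, one_mul] at h
  rw [← h.tsum_eq]
  congr 1
  funext k
  ring
end

section
/- For every k ≥ 1 and y ∈ ℝ, |e^{−y²/2} H_k(y)| ≤ C₀ √(k!) k^{−1/12} e^{−y²/4} for some absolute constant C₀ > 0. -/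
open MeasureTheory Filter

/-- Derivative of the WKB energy `f v² - f' u v + (f q + f'' / 2) u²`, where `f = q ^ (-1/2) = 1 / s`,
for a solution of `u'' = -q u`, `q = s ^ 2 = K - y ^ 2 / 4`. -/
lemma hasDerivAt_wkbEnergy {u v s : ℝ → ℝ} {y : ℝ}
    (hu : HasDerivAt u (v y) y) (hv : HasDerivAt v (-(s y ^ 2) * u y) y)
    (hs : HasDerivAt s (-y / (4 * s y)) y) (hpos : 0 < s y) :
    HasDerivAt (fun t ↦ v t ^ 2 / s t - t / (4 * s t ^ 3) * (u t * v t)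
        + (s t + 1 / (8 * s t ^ 3) + 3 * t ^ 2 / (32 * s t ^ 5)) * u t ^ 2)
      ((9 / 32 * y / s y ^ 5 + 15 / 128 * y ^ 3 / s y ^ 7) * u y ^ 2) y := by
  have hne := hpos.ne'
  have h1 := (hv.pow 2).div hs hne
  have h2 := ((hasDerivAt_id y).div ((hs.pow 3).const_mul 4) (by simp [hne])).mul (hu.mul hv)
  have h3 := ((hs.add ((hasDerivAt_const y (1 : ℝ)).div ((hs.pow 3).const_mul 8) (by simp [hne]))).add
    ((((hasDerivAt_id y).pow 2).const_mul 3).div ((hs.pow 5).const_mul 32) (by simp [hne]))).mul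
    (hu.pow 2)
  refine ((h1.sub h2).add h3).congr_deriv ?_
  simp only [Pi.pow_apply, id, Pi.add_apply, Pi.mul_apply, Pi.div_apply]
  field_simp
  ring

/-- Lower bound for the WKB energy. -/
lemma le_wkbEnergy {a b s y : ℝ} (hs : 0 < s) (hy : 0 ≤ y) (hys : y ≤ 2 * s ^ 3) :
    3 / 4 * (b ^ 2 / s + s * a ^ 2) ≤ b ^ 2 / s - y / (4 * s ^ 3) * (a * b)
        + (s + 1 / (8 * s ^ 3) + 3 * y ^ 2 / (32 * s ^ 5)) * a ^ 2 := by
  have h1 : y / (4 * s ^ 3) ≤ 1 / 2 := by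
    rw [div_le_iff₀ (by positivity)]; linarith
  have h0 : 0 ≤ y / (4 * s ^ 3) := by positivity
  have h2 : a * b ≤ 1 / 2 * (b ^ 2 / s + s * a ^ 2) := by
    have : 0 ≤ (b - s * a) ^ 2 / s := by positivity
    have e : (b - s * a) ^ 2 / s = b ^ 2 / s + s * a ^ 2 - 2 * (a * b) := by
      field_simp; ring
    linarith
  have h3 : 0 ≤ b ^ 2 / s + s * a ^ 2 := by positivity
  have h4 : y / (4 * s ^ 3) * (a * b) ≤ 1 / 4 * (b ^ 2 / s + s * a ^ 2) := by
    calc _ ≤ y / (4 * s ^ 3) * (1 / 2 * (b ^ 2 / s + s * a ^ 2)) := by gcongr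
      _ ≤ 1 / 2 * (1 / 2 * (b ^ 2 / s + s * a ^ 2)) := by gcongr
      _ = _ := by ring
  have h5 : 0 ≤ (1 / (8 * s ^ 3) + 3 * y ^ 2 / (32 * s ^ 5)) * a ^ 2 := by positivity
  linarith

section WeberEquation

variable {u v : ℝ → ℝ} {r N : ℝ}

/-- Bound of a solution of Weber's equation up to distance `O(1 / r)` from the turning point. -/
lemma weber_bound_oscillatory (hr : 1 ≤ r)
    (hu : ∀ y, HasDerivAt u (v y) y) (hv : ∀ y, HasDerivAt v (-(r ^ 6 - y ^ 2 / 4) * u y) y)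
    (hv0 : v 0 ^ 2 ≤ N * r ^ 3) (hu0 : r ^ 3 * u 0 ^ 2 ≤ N)
    {y : ℝ} (hy : 0 ≤ y) (hyr : r ^ 2 ≤ r ^ 6 - y ^ 2 / 4) :
    v y ^ 2 ≤ 12 * N * √(r ^ 6 - y ^ 2 / 4) ∧ √(r ^ 6 - y ^ 2 / 4) * u y ^ 2 ≤ 12 * N := by
  have hr0 : 0 < r := by linarith
  have hN : 0 ≤ N := le_trans (by positivity) hu0
  set s : ℝ → ℝ := fun t ↦ √(r ^ 6 - t ^ 2 / 4) with hs_def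
  have hq : ∀ t ∈ Set.Icc 0 y, r ^ 2 ≤ r ^ 6 - t ^ 2 / 4 := by
    intro t ht
    have : t ^ 2 ≤ y ^ 2 := pow_le_pow_left₀ ht.1 ht.2 2
    linarith
  have hsr : ∀ t ∈ Set.Icc 0 y, r ≤ s t := fun t ht ↦ Real.le_sqrt_of_sq_le (hq t ht)
  have hspos : ∀ t ∈ Set.Icc 0 y, 0 < s t := fun t ht ↦ hr0.trans_le (hsr t ht)
  have hssq : ∀ t ∈ Set.Icc 0 y, s t ^ 2 = r ^ 6 - t ^ 2 / 4 := fun t ht ↦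
    Real.sq_sqrt ((sq_nonneg r).trans (hq t ht))
  have hts : ∀ t ∈ Set.Icc 0 y, t ≤ 2 * s t ^ 3 := by
    intro t ht
    have h1 : t ≤ 2 * r ^ 3 := by
      refine le_of_sq_le_sq ?_ (by positivity)
      have := hq t ht
      nlinarith [sq_nonneg r]
    have h2 : r ^ 3 ≤ s t ^ 3 := pow_le_pow_left₀ hr0.le (hsr t ht) 3
    linarith
  have hsd : ∀ t ∈ Set.Icc 0 y, HasDerivAt s (-t / (4 * s t)) t := by
    intro t ht
    have h1 : HasDerivAt (fun t : ℝ ↦ r ^ 6 - t ^ 2 / 4) (-(2 * t / 4)) t := by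
      simpa using (((hasDerivAt_id t).pow 2).div_const 4).const_sub (r ^ 6)
    refine (h1.sqrt ?_).congr_deriv ?_
    · exact (lt_of_lt_of_le (by positivity) (hq t ht)).ne'
    · change -(2 * t / 4) / (2 * s t) = _
      field_simp
  set Q : ℝ → ℝ := fun t ↦ v t ^ 2 / s t - t / (4 * s t ^ 3) * (u t * v t)
        + (s t + 1 / (8 * s t ^ 3) + 3 * t ^ 2 / (32 * s t ^ 5)) * u t ^ 2 with hQ_def
  have hQd : ∀ t ∈ Set.Icc 0 y,
      HasDerivAt Q ((9 / 32 * t / s t ^ 5 + 15 / 128 * t ^ 3 / s t ^ 7) * u t ^ 2) t := by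
    intro t ht
    refine hasDerivAt_wkbEnergy (hu t) ?_ (hsd t ht) (hspos t ht)
    rw [hssq t ht]; exact hv t
  have hQlow : ∀ t ∈ Set.Icc 0 y, 3 / 4 * (v t ^ 2 / s t + s t * u t ^ 2) ≤ Q t := fun t ht ↦
    le_wkbEnergy (hspos t ht) ht.1 (hts t ht)
  have hgd : ∀ t ∈ Set.Icc 0 y,
      HasDerivAt (fun t ↦ -(r ^ 6 / s t ^ 6)) (-(3 / 2 * r ^ 6 * t / s t ^ 8)) t := by
    intro t ht
    have hne := (hspos t ht).ne'
    refine ((hasDerivAt_const t (r ^ 6)).div ((hsd t ht).pow 6) (by simp [hne])).neg.congr_deriv ?_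
    simp only [Pi.pow_apply]
    field_simp
    ring
  have hPd : ∀ t ∈ Set.Icc 0 y, HasDerivAt (fun t ↦ Q t * Real.exp (-(r ^ 6 / s t ^ 6)))
      (((9 / 32 * t / s t ^ 5 + 15 / 128 * t ^ 3 / s t ^ 7) * u t ^ 2
        - Q t * (3 / 2 * r ^ 6 * t / s t ^ 8)) * Real.exp (-(r ^ 6 / s t ^ 6))) t := by
    intro t ht
    refine ((hQd t ht).mul (hgd t ht).exp).congr_deriv ?_
    ring
  have hanti : AntitoneOn (fun t ↦ Q t * Real.exp (-(r ^ 6 / s t ^ 6))) (Set.Icc 0 y) := by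
    refine antitoneOn_of_deriv_nonpos (convex_Icc 0 y)
      (fun t ht ↦ (hPd t ht).continuousAt.continuousWithinAt)
      (fun t ht ↦ (hPd t (interior_subset ht)).differentiableAt.differentiableWithinAt) ?_
    intro t ht
    replace ht := interior_subset ht
    rw [(hPd t ht).deriv]
    refine mul_nonpos_of_nonpos_of_nonneg ?_ (Real.exp_pos _).le
    have hsp := hspos t ht
    have ht0 : 0 ≤ t := ht.1
    have h1 : 3 / 4 * (s t * u t ^ 2) ≤ Q t := by
      refine le_trans ?_ (hQlow t ht)
      have : 0 ≤ v t ^ 2 / s t := by positivity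
      linarith
    have h2 : 3 / 4 * (s t * u t ^ 2) * (3 / 2 * r ^ 6 * t / s t ^ 8)
        ≤ Q t * (3 / 2 * r ^ 6 * t / s t ^ 8) := by gcongr
    have h3 : (9 / 32 * t / s t ^ 5 + 15 / 128 * t ^ 3 / s t ^ 7) * u t ^ 2
        ≤ 3 / 4 * (s t * u t ^ 2) * (3 / 2 * r ^ 6 * t / s t ^ 8) := by
      have e : 3 / 4 * (s t * u t ^ 2) * (3 / 2 * r ^ 6 * t / s t ^ 8)
          - (9 / 32 * t / s t ^ 5 + 15 / 128 * t ^ 3 / s t ^ 7) * u t ^ 2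
          = u t ^ 2 * t / s t ^ 7 * (9 / 8 * r ^ 6 - 9 / 32 * s t ^ 2 - 15 / 128 * t ^ 2) := by
        field_simp
        ring
      have h4 : 0 ≤ 9 / 8 * r ^ 6 - 9 / 32 * s t ^ 2 - 15 / 128 * t ^ 2 := by
        rw [hssq t ht]
        have := hq t ht
        nlinarith [sq_nonneg r, sq_nonneg t]
      have : 0 ≤ u t ^ 2 * t / s t ^ 7 * (9 / 8 * r ^ 6 - 9 / 32 * s t ^ 2 - 15 / 128 * t ^ 2) := by
        positivity
      linarith
    linarith
  have hmem0 : (0 : ℝ) ∈ Set.Icc 0 y := ⟨le_rfl, hy⟩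
  have hmemy : y ∈ Set.Icc 0 y := ⟨hy, le_rfl⟩
  have hs0 : s 0 = r ^ 3 := by
    simp only [hs_def]
    rw [show r ^ 6 - 0 ^ 2 / 4 = (r ^ 3) ^ 2 by ring, Real.sqrt_sq (by positivity)]
  have hQ0 : Q 0 ≤ 3 * N := by
    simp only [hQ_def, hs0]
    have h1 : v 0 ^ 2 / r ^ 3 ≤ N := by
      rw [div_le_iff₀ (by positivity)]; exact hv0
    have hr3 : 1 ≤ r ^ 3 := one_le_pow₀ hr
    have h2 : 1 / (8 * (r ^ 3) ^ 3) ≤ r ^ 3 := by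
      rw [div_le_iff₀ (by positivity)]
      nlinarith [one_le_pow₀ (n := 3) hr3, one_le_pow₀ (n := 4) hr3]
    have h3 : 1 / (8 * (r ^ 3) ^ 3) * u 0 ^ 2 ≤ r ^ 3 * u 0 ^ 2 := by gcongr
    have : v 0 ^ 2 / r ^ 3 - 0 / (4 * (r ^ 3) ^ 3) * (u 0 * v 0)
        + (r ^ 3 + 1 / (8 * (r ^ 3) ^ 3) + 3 * 0 ^ 2 / (32 * (r ^ 3) ^ 5)) * u 0 ^ 2
        = v 0 ^ 2 / r ^ 3 + r ^ 3 * u 0 ^ 2 + 1 / (8 * (r ^ 3) ^ 3) * u 0 ^ 2 := by ring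
    linarith
  have hQy : Q y ≤ 9 * N := by
    have h1 : Q y * Real.exp (-(r ^ 6 / s y ^ 6)) ≤ Q 0 * Real.exp (-(r ^ 6 / s 0 ^ 6)) :=
      hanti hmem0 hmemy hy
    have h2 : Real.exp (-(r ^ 6 / s 0 ^ 6)) ≤ 1 := by
      rw [Real.exp_le_one_iff, neg_nonpos]; rw [hs0]; positivity
    have h3 : r ^ 6 / s y ^ 6 ≤ 1 := by
      have := hspos y hmemy
      rw [div_le_one (by positivity)]
      exact pow_le_pow_left₀ hr0.le (hsr y hmemy) 6
    have h4 : Q 0 * Real.exp (-(r ^ 6 / s 0 ^ 6)) ≤ 3 * N := by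
      calc _ ≤ 3 * N * Real.exp (-(r ^ 6 / s 0 ^ 6)) := by gcongr
        _ ≤ 3 * N * 1 := by gcongr
        _ = _ := mul_one _
    have h5 : Q y = Q y * Real.exp (-(r ^ 6 / s y ^ 6)) * Real.exp (r ^ 6 / s y ^ 6) := by
      rw [mul_assoc, ← Real.exp_add]; simp
    have h6 : Real.exp (r ^ 6 / s y ^ 6) ≤ 3 :=
      (Real.exp_le_exp.2 h3).trans (by linarith [Real.exp_one_lt_d9])
    rw [h5]
    calc _ ≤ 3 * N * Real.exp (r ^ 6 / s y ^ 6) :=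
          mul_le_mul_of_nonneg_right (h1.trans h4) (Real.exp_pos _).le
      _ ≤ 3 * N * 3 := by gcongr
      _ = _ := by ring
  have hlow := hQlow y hmemy
  have hsp := hspos y hmemy
  have hA : 0 ≤ v y ^ 2 / s y := by positivity
  have hB : 0 ≤ s y * u y ^ 2 := by positivity
  refine ⟨?_, ?_⟩
  · rw [← div_le_iff₀ hsp]; linarith
  · change s y * u y ^ 2 ≤ _; linarith

/-- Bound of a decaying solution of Weber's equation `u'' + (r⁶ - y² / 4) u = 0`, in terms of
its data at `0`. -/
lemma weber_bound (hr : 1 ≤ r)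
    (hu : ∀ y, HasDerivAt u (v y) y) (hv : ∀ y, HasDerivAt v (-(r ^ 6 - y ^ 2 / 4) * u y) y)
    (hv0 : v 0 ^ 2 ≤ N * r ^ 3) (hu0 : r ^ 3 * u 0 ^ 2 ≤ N)
    (hlim : Tendsto (fun y ↦ u y * v y) atTop (nhds 0))
    {y : ℝ} (hy : 0 ≤ y) : r * u y ^ 2 ≤ 216 * N := by
  have hr0 : 0 < r := by linarith
  have hN : 0 ≤ N := le_trans (by positivity) hu0
  have hosc : ∀ t, 0 ≤ t → r ^ 2 ≤ r ^ 6 - t ^ 2 / 4 → r * u t ^ 2 ≤ 12 * N := by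
    intro t ht htr
    refine le_trans ?_ (weber_bound_oscillatory hr hu hv hv0 hu0 ht htr).2
    gcongr
    exact Real.le_sqrt_of_sq_le htr
  have hr26 : r ^ 2 ≤ r ^ 6 := pow_le_pow_right₀ hr (by norm_num)
  set y₀ : ℝ := 2 * √(r ^ 6 - r ^ 2) with hy₀
  have hy₀0 : 0 ≤ y₀ := by positivity
  have hy₀sq : y₀ ^ 2 = 4 * (r ^ 6 - r ^ 2) := by
    rw [hy₀, mul_pow, Real.sq_sqrt (by linarith)]; ring
  have hq₀ : r ^ 6 - y₀ ^ 2 / 4 = r ^ 2 := by rw [hy₀sq]; ring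
  have hend := weber_bound_oscillatory hr hu hv hv0 hu0 hy₀0 hq₀.ge
  rw [hq₀, Real.sqrt_sq hr0.le] at hend
  have hy₀T : y₀ ≤ 2 * r ^ 3 := by
    refine le_of_sq_le_sq ?_ (by positivity)
    nlinarith [sq_nonneg r]
  have hwidth : r * (2 * r ^ 3 - y₀) ≤ 2 := by
    have h1 : (2 * r ^ 3 - y₀) * (2 * r ^ 3 + y₀) = 4 * r ^ 2 := by
      linear_combination -hy₀sq
    have h2 : (2 * r ^ 3 - y₀) * (2 * r ^ 3) ≤ 4 * r ^ 2 := by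
      rw [← h1]
      gcongr
      linarith
    have h3 : 0 < 2 * r ^ 2 := by positivity
    refine le_of_mul_le_mul_left ?_ h3
    linarith
  have htrans : ∀ t, y₀ ≤ t → t ≤ 2 * r ^ 3 → r * u t ^ 2 ≤ 216 * N := by
    have hGd : ∀ t, HasDerivAt (fun t ↦ v t ^ 2 + (r ^ 6 - t ^ 2 / 4) * u t ^ 2)
        (-(t / 2) * u t ^ 2) t := by
      intro t
      have h1 : HasDerivAt (fun t : ℝ ↦ r ^ 6 - t ^ 2 / 4) (-(2 * t / 4)) t := by
        simpa using (((hasDerivAt_id t).pow 2).div_const 4).const_sub (r ^ 6)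
      refine (((hv t).pow 2).add (h1.mul ((hu t).pow 2))).congr_deriv ?_
      simp only [Pi.pow_apply]
      ring
    have hG : AntitoneOn (fun t ↦ v t ^ 2 + (r ^ 6 - t ^ 2 / 4) * u t ^ 2) (Set.Ici 0) := by
      refine antitoneOn_of_deriv_nonpos (convex_Ici 0)
        (fun t _ ↦ (hGd t).continuousAt.continuousWithinAt)
        (fun t _ ↦ (hGd t).differentiableAt.differentiableWithinAt) ?_
      intro t ht
      rw [(hGd t).deriv]
      have : 0 ≤ t := interior_subset ht
      have : 0 ≤ t / 2 * u t ^ 2 := by positivity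
      linarith
    have hvb : ∀ t, y₀ ≤ t → t ≤ 2 * r ^ 3 → ‖v t‖ ≤ √(24 * N * r) := by
      intro t ht htT
      have ht0 : 0 ≤ t := hy₀0.trans ht
      have h1 : v t ^ 2 + (r ^ 6 - t ^ 2 / 4) * u t ^ 2
          ≤ v y₀ ^ 2 + (r ^ 6 - y₀ ^ 2 / 4) * u y₀ ^ 2 := hG hy₀0 ht0 ht
      rw [hq₀] at h1
      have h2 : 0 ≤ r ^ 6 - t ^ 2 / 4 := by
        have := pow_le_pow_left₀ ht0 htT 2
        nlinarith
      have h3 : 0 ≤ (r ^ 6 - t ^ 2 / 4) * u t ^ 2 := by positivity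
      have h4 : r ^ 2 * u y₀ ^ 2 ≤ r * (12 * N) := by
        calc r ^ 2 * u y₀ ^ 2 = r * (r * u y₀ ^ 2) := by ring
          _ ≤ _ := mul_le_mul_of_nonneg_left hend.2 hr0.le
      rw [Real.norm_eq_abs]
      refine Real.abs_le_sqrt ?_
      linarith [hend.1]
    intro t ht htT
    have h1 : ‖u t - u y₀‖ ≤ √(24 * N * r) * (t - y₀) :=
      norm_image_sub_le_of_norm_deriv_le_segment' (fun x _ ↦ (hu x).hasDerivWithinAt)
        (fun x hx ↦ hvb x hx.1 (hx.2.le.trans htT)) t ⟨ht, le_rfl⟩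
    have h2 : r * (u t - u y₀) ^ 2 ≤ 96 * N := by
      have h3 : (u t - u y₀) ^ 2 ≤ 24 * N * r * (t - y₀) ^ 2 := by
        rw [← sq_abs, ← Real.norm_eq_abs]
        refine (pow_le_pow_left₀ (norm_nonneg _) h1 2).trans_eq ?_
        rw [mul_pow, Real.sq_sqrt (by positivity)]
      have h4 : (r * (t - y₀)) ^ 2 ≤ 2 ^ 2 := by
        refine pow_le_pow_left₀ (mul_nonneg hr0.le (by linarith)) (le_trans ?_ hwidth) 2
        gcongr
      calc r * (u t - u y₀) ^ 2 ≤ r * (24 * N * r * (t - y₀) ^ 2) := by gcongr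
        _ = 24 * N * (r * (t - y₀)) ^ 2 := by ring
        _ ≤ 24 * N * 2 ^ 2 := by gcongr
        _ = _ := by ring
    have h5 : u t ^ 2 ≤ 2 * (u y₀ ^ 2 + (u t - u y₀) ^ 2) := by
      nlinarith [sq_nonneg (u t - 2 * u y₀)]
    calc r * u t ^ 2 ≤ r * (2 * (u y₀ ^ 2 + (u t - u y₀) ^ 2)) := by gcongr
      _ = 2 * (r * u y₀ ^ 2 + r * (u t - u y₀) ^ 2) := by ring
      _ ≤ 2 * (12 * N + 96 * N) := by linarith [hend.2]
      _ = _ := by ring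
  rcases le_total y y₀ with h | h
  · refine (hosc y hy ?_).trans (by linarith)
    have := pow_le_pow_left₀ hy h 2
    linarith
  rcases le_total y (2 * r ^ 3) with h' | h'
  · exact htrans y h h'
  have hwd : ∀ t, HasDerivAt (fun t ↦ u t * v t) (v t ^ 2 + (t ^ 2 / 4 - r ^ 6) * u t ^ 2) t := by
    intro t
    refine ((hu t).mul (hv t)).congr_deriv ?_
    ring
  have hT0 : 0 ≤ 2 * r ^ 3 := by positivity
  have hmono : MonotoneOn (fun t ↦ u t * v t) (Set.Ici (2 * r ^ 3)) := by
    refine monotoneOn_of_deriv_nonneg (convex_Ici _)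
      (fun t _ ↦ (hwd t).continuousAt.continuousWithinAt)
      (fun t _ ↦ (hwd t).differentiableAt.differentiableWithinAt) ?_
    intro t ht
    rw [(hwd t).deriv]
    have ht' : 2 * r ^ 3 ≤ t := interior_subset ht
    have : 0 ≤ t ^ 2 / 4 - r ^ 6 := by
      have := pow_le_pow_left₀ hT0 ht' 2
      nlinarith
    positivity
  have hnonpos : ∀ t, 2 * r ^ 3 ≤ t → u t * v t ≤ 0 := by
    intro t ht
    refine ge_of_tendsto hlim ?_
    filter_upwards [eventually_ge_atTop t] with x hx
    exact hmono ht (ht.trans hx) hx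
  have hsqd : ∀ t, HasDerivAt (fun t ↦ u t ^ 2) (2 * (u t * v t)) t := by
    intro t
    refine ((hu t).pow 2).congr_deriv ?_
    ring
  have hanti : AntitoneOn (fun t ↦ u t ^ 2) (Set.Ici (2 * r ^ 3)) := by
    refine antitoneOn_of_deriv_nonpos (convex_Ici _)
      (fun t _ ↦ (hsqd t).continuousAt.continuousWithinAt)
      (fun t _ ↦ (hsqd t).differentiableAt.differentiableWithinAt) ?_
    intro t ht
    rw [(hsqd t).deriv]
    linarith [hnonpos t (interior_subset ht)]
  have hle : u y ^ 2 ≤ u (2 * r ^ 3) ^ 2 := hanti (Set.mem_Ici.2 le_rfl) h' h'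
  calc r * u y ^ 2 ≤ r * u (2 * r ^ 3) ^ 2 := by gcongr
    _ ≤ _ := htrans _ hy₀T le_rfl

end WeberEquation

open Polynomial in
lemma derivative_hermite_succ_s10 (n : ℕ) :
    derivative (hermite (n + 1)) = ((n : ℤ[X]) + 1) * hermite n := by
  induction n with
  | zero => simp
  | succ n ih =>
    rw [hermite_succ (n + 1), derivative_sub, derivative_mul, ih, derivative_X, derivative_mul]
    have h := hermite_succ n
    have h0 : derivative ((n : ℤ[X]) + 1) = 0 := by simp
    rw [h0]
    push_cast
    linear_combination (-(n : ℤ[X]) - 1) * h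

lemma Hermite_succ_succ (n : ℕ) (x : ℝ) :
    Hermite (n + 2) x = x * Hermite (n + 1) x - (n + 1) * Hermite n x := by
  unfold Hermite
  rw [Polynomial.hermite_succ (n + 1), derivative_hermite_succ_s10]
  simp

lemma hasDerivAt_Hermite_succ (n : ℕ) (x : ℝ) :
    HasDerivAt (Hermite (n + 1)) ((n + 1) * Hermite n x) x := by
  have h := (Polynomial.hermite (n + 1)).hasDerivAt_aeval x
  rw [derivative_hermite_succ_s10] at h
  refine h.congr_deriv ?_
  simp [Hermite]

lemma succ_mul_Hermite_zero_pow_four_le (n : ℕ) :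
    ((n : ℝ) + 1) * (Hermite n 0 ^ 2) ^ 2 ≤ (n.factorial : ℝ) ^ 2 := by
  induction n using Nat.twoStepInduction with
  | zero => simp [Hermite]
  | one => simp [Hermite]
  | more n ih _ =>
    rw [Hermite_succ_succ, Nat.factorial_succ, Nat.factorial_succ]
    push_cast
    have hn : (0 : ℝ) ≤ n := n.cast_nonneg
    calc ((n : ℝ) + 2 + 1) * ((0 * Hermite (n + 1) 0 - (n + 1) * Hermite n 0) ^ 2) ^ 2
        = (n + 3) * (n + 1) * (n + 1) ^ 2 * ((n + 1) * (Hermite n 0 ^ 2) ^ 2) := by ring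
      _ ≤ (n + 2) ^ 2 * (n + 1) ^ 2 * (n.factorial : ℝ) ^ 2 := by
        gcongr
        nlinarith
      _ = _ := by ring

lemma sqrt_mul_Hermite_zero_sq_le (n : ℕ) :
    √((n : ℝ) + 1) * Hermite n 0 ^ 2 ≤ n.factorial := by
  refine le_of_sq_le_sq ?_ (by positivity)
  rw [mul_pow, Real.sq_sqrt (by positivity)]
  exact succ_mul_Hermite_zero_pow_four_le n

lemma tendsto_polynomial_mul_exp_neg_sq (p : Polynomial ℝ) :
    Tendsto (fun x ↦ p.eval x * Real.exp (-x ^ 2 / 2)) atTop (nhds 0) := by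
  refine squeeze_zero_norm' ?_ (norm_zero (E := ℝ) ▸ p.tendsto_div_exp_atTop.norm)
  filter_upwards [eventually_ge_atTop 2] with x hx
  rw [norm_mul, div_eq_mul_inv (p.eval x), norm_mul, ← Real.exp_neg, Real.norm_of_nonneg (Real.exp_pos _).le,
    Real.norm_of_nonneg (Real.exp_pos _).le]
  gcongr
  nlinarith

lemma hasDerivAt_Hermite (n : ℕ) (x : ℝ) :
    HasDerivAt (Hermite n) (x * Hermite n x - Hermite (n + 1) x) x := by
  refine ((Polynomial.hermite n).hasDerivAt_aeval x).congr_deriv ?_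
  simp [Hermite, Polynomial.hermite_succ]

/-- Sharp uniform bound for Hermite functions. -/
lemma rpow_mul_Hermite_mul_exp_sq_le (n : ℕ) (y : ℝ) :
    ((n : ℝ) + 3 / 2) ^ (1 / 6 : ℝ) * (Hermite (n + 1) y * Real.exp (-y ^ 2 / 4)) ^ 2
      ≤ 216 * (n + 1).factorial := by
  set r : ℝ := ((n : ℝ) + 3 / 2) ^ (1 / 6 : ℝ) with hr_def
  have hn : (0 : ℝ) ≤ n := n.cast_nonneg
  have hr : 1 ≤ r := Real.one_le_rpow (by linarith) (by norm_num)
  have hr6 : r ^ 6 = n + 3 / 2 := by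
    rw [hr_def, ← Real.rpow_natCast, ← Real.rpow_mul (by positivity)]
    norm_num
  have hr3 : r ^ 3 = √((n : ℝ) + 3 / 2) := by
    rw [← hr6, show r ^ 6 = (r ^ 3) ^ 2 by ring, Real.sqrt_sq (by positivity)]
  set u : ℝ → ℝ := fun x ↦ Hermite (n + 1) x * Real.exp (-x ^ 2 / 4) with hu_def
  set v : ℝ → ℝ := fun x ↦
    ((n + 1) * Hermite n x - x / 2 * Hermite (n + 1) x) * Real.exp (-x ^ 2 / 4) with hv_def
  have he : ∀ x : ℝ, HasDerivAt (fun x : ℝ ↦ Real.exp (-x ^ 2 / 4))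
      (Real.exp (-x ^ 2 / 4) * (-(x / 2))) x := by
    intro x
    refine (((hasDerivAt_pow 2 x).neg.div_const 4).exp).congr_deriv ?_
    simp
    ring
  have hu : ∀ x, HasDerivAt u (v x) x := by
    intro x
    refine ((hasDerivAt_Hermite_succ n x).mul (he x)).congr_deriv ?_
    simp only [hv_def]
    ring
  have hv : ∀ x, HasDerivAt v (-(r ^ 6 - x ^ 2 / 4) * u x) x := by
    intro x
    refine ((((hasDerivAt_Hermite n x).const_mul ((n : ℝ) + 1)).sub
      (((hasDerivAt_id x).div_const 2).mul (hasDerivAt_Hermite_succ n x))).mul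
      (he x)).congr_deriv ?_
    simp only [hu_def, hr6, id, Pi.sub_apply, Pi.mul_apply]
    ring
  have hv0 : v 0 ^ 2 ≤ (n + 1).factorial * r ^ 3 := by
    have h1 := sqrt_mul_Hermite_zero_sq_le n
    have h2 : √((n : ℝ) + 1) ^ 2 = n + 1 := Real.sq_sqrt (by positivity)
    have h3 : √((n : ℝ) + 1) ≤ r ^ 3 := by
      rw [hr3]; exact Real.sqrt_le_sqrt (by linarith)
    rw [Nat.factorial_succ]
    push_cast
    calc v 0 ^ 2 = (n + 1) * (n + 1) * Hermite n 0 ^ 2 := by simp [hv_def]; ring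
      _ = (n + 1) * √((n : ℝ) + 1) * (√((n : ℝ) + 1) * Hermite n 0 ^ 2) := by
        linear_combination -((n : ℝ) + 1) * Hermite n 0 ^ 2 * h2
      _ ≤ (n + 1) * r ^ 3 * n.factorial := by gcongr
      _ = _ := by ring
  have hu0 : r ^ 3 * u 0 ^ 2 ≤ (n + 1).factorial := by
    have h1 := sqrt_mul_Hermite_zero_sq_le (n + 1)
    refine le_trans ?_ h1
    have : u 0 = Hermite (n + 1) 0 := by simp [hu_def]
    rw [this, hr3]
    refine mul_le_mul_of_nonneg_right (Real.sqrt_le_sqrt ?_) (sq_nonneg _)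
    push_cast
    linarith
  obtain ⟨p, hp⟩ : ∃ p : Polynomial ℝ, ∀ x, u x * v x = p.eval x * Real.exp (-x ^ 2 / 2) := by
    set a := (Polynomial.hermite (n + 1)).map (algebraMap ℤ ℝ)
    set b := (Polynomial.hermite n).map (algebraMap ℤ ℝ)
    have ha : ∀ x, Hermite (n + 1) x = a.eval x := fun x ↦
      (Polynomial.eval_map_algebraMap _ _).symm
    have hb : ∀ x, Hermite n x = b.eval x := fun x ↦ (Polynomial.eval_map_algebraMap _ _).symm
    refine ⟨a * (Polynomial.C ((n : ℝ) + 1) * b - Polynomial.C (1 / 2) * Polynomial.X * a), ?_⟩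
    intro x
    have h1 : Real.exp (-x ^ 2 / 2) = Real.exp (-x ^ 2 / 4) * Real.exp (-x ^ 2 / 4) := by
      rw [← Real.exp_add]; ring_nf
    simp only [hu_def, hv_def, ha, hb, h1, Polynomial.eval_mul, Polynomial.eval_sub,
      Polynomial.eval_C, Polynomial.eval_X]
    ring
  rcases le_total 0 y with hy | hy
  · refine weber_bound hr hu hv hv0 hu0 ?_ hy
    simp only [hp]
    exact tendsto_polynomial_mul_exp_neg_sq p
  · have hu' : ∀ x, HasDerivAt (fun x ↦ u (-x)) (-v (-x)) x := by
      intro x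
      refine ((hu (-x)).comp x (hasDerivAt_neg x)).congr_deriv ?_
      ring
    have hv' : ∀ x, HasDerivAt (fun x ↦ -v (-x)) (-(r ^ 6 - x ^ 2 / 4) * u (-x)) x := by
      intro x
      refine ((hv (-x)).comp x (hasDerivAt_neg x)).neg.congr_deriv ?_
      ring
    have h := weber_bound (N := (n + 1).factorial) hr hu' hv' (by simpa using hv0)
      (by simpa using hu0) ?_ (neg_nonneg.2 hy)
    · simpa using h
    · have h1 := (tendsto_polynomial_mul_exp_neg_sq (p.comp (-Polynomial.X))).neg
      rw [neg_zero] at h1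
      refine h1.congr fun x ↦ ?_
      rw [mul_neg, hp]
      simp

theorem stmt10 : ∃ C₀ > 0, ∀ k : ℕ, 1 ≤ k → ∀ y : ℝ,
    |Real.exp (-y ^ 2 / 2) * Hermite k y|
      ≤ C₀ * Real.sqrt (Nat.factorial k) * (k : ℝ) ^ (-(1 / 12 : ℝ)) *
          Real.exp (-y ^ 2 / 4) := by
  refine ⟨15, by norm_num, fun k hk y ↦ ?_⟩
  obtain ⟨n, rfl⟩ := Nat.exists_eq_add_of_le' hk
  have hb := rpow_mul_Hermite_mul_exp_sq_le n y
  set w := Hermite (n + 1) y * Real.exp (-y ^ 2 / 4) with hw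
  have hk0 : (0 : ℝ) < (n + 1 : ℕ) := by positivity
  set c : ℝ := ((n + 1 : ℕ) : ℝ) ^ (1 / 12 : ℝ) with hc
  have hc0 : 0 < c := Real.rpow_pos_of_pos hk0 _
  have hc2 : c ^ 2 ≤ ((n : ℝ) + 3 / 2) ^ (1 / 6 : ℝ) := by
    have : c ^ 2 = ((n + 1 : ℕ) : ℝ) ^ (1 / 6 : ℝ) := by
      rw [hc, ← Real.rpow_natCast, ← Real.rpow_mul hk0.le]
      norm_num
    rw [this]
    refine Real.rpow_le_rpow hk0.le ?_ (by norm_num)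
    push_cast
    linarith
  have hcw : c * |w| ≤ 15 * √((n + 1).factorial : ℝ) := by
    refine le_of_sq_le_sq ?_ (by positivity)
    rw [mul_pow, mul_pow, sq_abs, Real.sq_sqrt (by positivity)]
    calc c ^ 2 * w ^ 2 ≤ ((n : ℝ) + 3 / 2) ^ (1 / 6 : ℝ) * w ^ 2 := by gcongr
      _ ≤ 216 * ((n + 1).factorial : ℝ) := hb
      _ ≤ 15 ^ 2 * ((n + 1).factorial : ℝ) := by gcongr; norm_num
  have hsplit : Real.exp (-y ^ 2 / 2) * Hermite (n + 1) y = w * Real.exp (-y ^ 2 / 4) := by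
    rw [hw, mul_assoc, ← Real.exp_add]
    ring_nf
  rw [hsplit, abs_mul, abs_of_pos (Real.exp_pos _), Real.rpow_neg hk0.le, ← hc]
  gcongr
  rw [← div_eq_mul_inv, le_div_iff₀ hc0, mul_comm]
  exact hcw
end
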